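/- Let (A, I) be a henselian pair of commutative rings. Then: (i) for every finitely generated projective A/I-module P̄ there exists a finitely generated projective A-module P together with an isomorphism P ⊗_A A/I ≅ P̄ of A/I-modules; (ii) if P₁ and P₂ are finitely generated projective A-modules and β̄ : P₁ ⊗_A A/I → P₂ ⊗_A A/I is an isomorphism of A/I-modules, then there exists an isomorphism β : P₁ → P₂ of A-modules with β ⊗_A id_{A/I} = β̄. -/

import Mathlib

open TensorProduct

lemma aux_exists_b {A R S : Type} [CommRing A] [CommRing R] [CommRing S] (I : Ideal A)
    [Algebra A R] [Module.Finite A R] [Algebra R S] [Algebra A S] [IsScalarTower A R S]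
    (Δ : R) [IsLocalization.Away Δ S] [Algebra.FormallyUnramified A S]
    (φ : R →ₐ[A] A ⧸ I) (hΔ : IsUnit (φ Δ)) :
    ∃ b : R, φ b = 1 ∧ ∀ k, φ k = 0 → b * k ∈ I.map (algebraMap A R) := by
  classical
  obtain ⟨s, hs⟩ := Module.Finite.fg_top (R := A) (M := R)
  have hφ : ∀ c : A, φ (algebraMap A R c) = Ideal.Quotient.mk I c := fun c => φ.commutes c
  have hsurj : Function.Surjective φ := fun x => by
    obtain ⟨c, rfl⟩ := Ideal.Quotient.mk_surjective x
    exact ⟨_, hφ c⟩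
  choose a ha using fun r => Ideal.Quotient.mk_surjective (φ r)
  set K : Ideal R := RingHom.ker φ with hKdef
  set IR := I.map (algebraMap A R) with hIR
  have hIK : IR ≤ K := by
    rw [hIR, Ideal.map_le_iff_le_comap]
    intro c hc
    rw [Ideal.mem_comap, hKdef, RingHom.mem_ker, hφ, Ideal.Quotient.eq_zero_iff_mem]
    exact hc
  set L : Ideal R := Ideal.span (((s.image fun r => r - algebraMap A R (a r)) : Finset R) : Set R)
    with hLdef
  have hLK : L ≤ K := by
    rw [hLdef, Ideal.span_le]
    intro x hx
    simp only [Finset.coe_image, Set.mem_image] at hx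
    obtain ⟨r, -, rfl⟩ := hx
    simp [hKdef, RingHom.mem_ker, hφ, ha]
  have hc : ∀ r : R, ∃ c : A, r - algebraMap A R c ∈ L := by
    intro r
    have hr : r ∈ Submodule.span A (s : Set R) := by rw [hs]; trivial
    induction hr using Submodule.span_induction with
    | mem x hx =>
      refine ⟨a x, Ideal.subset_span ?_⟩
      simp only [Finset.coe_image, Set.mem_image]
      exact ⟨x, hx, rfl⟩
    | zero => exact ⟨0, by simp⟩
    | add x y _ _ hx hy =>
      obtain ⟨c, hc⟩ := hx
      obtain ⟨d, hd⟩ := hy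
      refine ⟨c + d, ?_⟩
      have := L.add_mem hc hd
      rw [map_add]
      convert this using 1
      ring
    | smul t x _ hx =>
      obtain ⟨c, hc⟩ := hx
      refine ⟨t * c, ?_⟩
      have := L.mul_mem_left (algebraMap A R t) hc
      rw [Algebra.smul_def, map_mul, ← mul_sub]
      exact this
  have hKL : K ≤ IR ⊔ L := by
    intro r hr
    obtain ⟨c, hcr⟩ := hc r
    have h1 : φ (r - algebraMap A R c) = 0 := hLK hcr
    have h2 : φ r = 0 := hr
    rw [map_sub, h2, hφ, zero_sub, neg_eq_zero, Ideal.Quotient.eq_zero_iff_mem] at h1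
    have := add_mem (Ideal.mem_sup_left (T := L) (Ideal.mem_map_of_mem (algebraMap A R) h1))
      (Ideal.mem_sup_right (S := IR) hcr)
    simpa using this
  have hK2 : K ≤ K ^ 2 ⊔ IR := by
    set T := K ^ 2 ⊔ IR with hT
    let g1 : R →ₐ[A] R ⧸ T := Ideal.Quotient.mkₐ A T
    let g0 : A ⧸ I →ₐ[A] R ⧸ T := Ideal.Quotient.liftₐ I (Algebra.ofId A (R ⧸ T)) (by
      intro c hc
      change Ideal.Quotient.mk T (algebraMap A R c) = 0
      rw [Ideal.Quotient.eq_zero_iff_mem]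
      exact Ideal.mem_sup_right (Ideal.mem_map_of_mem _ hc))
    let g2 : R →ₐ[A] R ⧸ T := g0.comp φ
    have hu2 : IsUnit (g2 Δ) := hΔ.map g0
    have hu1 : IsUnit (g1 Δ) := by
      obtain ⟨d, hd⟩ := hsurj (↑hΔ.unit⁻¹)
      have h1 : Δ * d - 1 ∈ K := by
        rw [hKdef, RingHom.mem_ker, map_sub, map_mul, hd, map_one]
        simp
      have h2 : (g1 (Δ * d) - 1) ^ 2 = 0 := by
        rw [← map_one g1, ← map_sub, ← map_pow]
        exact Ideal.Quotient.eq_zero_iff_mem.mpr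
          (Ideal.mem_sup_left (Ideal.pow_mem_pow h1 2))
      have h3 : IsUnit (g1 (Δ * d)) := by
        have := IsNilpotent.isUnit_add_one ⟨2, h2⟩
        simpa using this
      rw [map_mul] at h3
      exact isUnit_of_mul_isUnit_left h3
    let G1 : S →ₐ[A] R ⧸ T := IsLocalization.Away.liftAlgHom (f := g1) Δ hu1
    let G2 : S →ₐ[A] R ⧸ T := IsLocalization.Away.liftAlgHom (f := g2) Δ hu2
    have hG : G1 = G2 := by
      apply Algebra.FormallyUnramified.lift_unique (K.map (Ideal.Quotient.mk T))
      · refine ⟨2, ?_⟩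
        rw [← Ideal.map_pow, Ideal.zero_eq_bot, Ideal.map_eq_bot_iff_le_ker, Ideal.mk_ker]
        exact le_sup_left
      · apply IsLocalization.algHom_ext (.powers Δ)
        ext r
        have e1 : G1 (algebraMap R S r) = g1 r := by simp [G1]
        have e2 : G2 (algebraMap R S r) = g2 r := by simp [G2]
        change Ideal.Quotient.mk _ (G1 (algebraMap R S r)) =
          Ideal.Quotient.mk _ (G2 (algebraMap R S r))
        rw [e1, e2, Ideal.Quotient.eq]
        have e3 : g2 r = g1 (algebraMap A R (a r)) := by
          change g0 (φ r) = _
          rw [← ha]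
          rfl
        rw [e3, ← map_sub]
        apply Ideal.mem_map_of_mem (Ideal.Quotient.mk T)
        simp [hKdef, RingHom.mem_ker, hφ, ha]
    intro k hk
    have e1 : G1 (algebraMap R S k) = g1 k := by simp [G1]
    have e2 : G2 (algebraMap R S k) = g2 k := by simp [G2]
    rw [← Ideal.Quotient.eq_zero_iff_mem]
    change g1 k = 0
    rw [← e1, hG, e2]
    change g0 (φ k) = 0
    rw [show φ k = 0 from hk, map_zero]
  have hLfg : L.FG := ⟨_, rfl⟩
  obtain ⟨b, hb1, hb2⟩ := Submodule.exists_sub_one_mem_and_smul_le_of_fg_of_le_sup (I := K)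
    (N := IR) (N' := L) (P := K) hLfg hLK (by
      refine hK2.trans (sup_le ?_ le_sup_left)
      rw [pow_two]
      calc K * K ≤ K * (IR ⊔ L) := Ideal.mul_mono_right hKL
        _ = K * IR ⊔ K * L := Ideal.mul_sup ..
        _ ≤ IR ⊔ K • L := sup_le_sup Ideal.mul_le_right (by simp))
  refine ⟨b, ?_, fun k hk => hb2 (Submodule.smul_mem_pointwise_smul k b K hk)⟩
  have : φ (b - 1) = 0 := hb1
  simpa [sub_eq_zero] using this

open Polynomial in
lemma aux_exists_poly {A R : Type} [CommRing A] [CommRing R] (I : Ideal A)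
    (hI : I ≤ Ideal.jacobson ⊥)
    [Algebra A R] [Module.Finite A R]
    (φ : R →ₐ[A] A ⧸ I) (b : R) (hb : φ b = 1)
    (hbk : ∀ k, φ k = 0 → b * k ∈ I.map (algebraMap A R)) :
    ∃ (χ : A[X]) (N : ℕ), χ.Monic ∧ χ.map (Ideal.Quotient.mk I) = (X - 1) * X ^ N ∧
      aeval b χ = 0 := by
  classical
  obtain ⟨s, hs⟩ := Module.Finite.fg_top (R := A) (M := R)
  have hφ : ∀ c : A, φ (algebraMap A R c) = Ideal.Quotient.mk I c := fun c => φ.commutes c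
  choose a ha using fun r => Ideal.Quotient.mk_surjective (φ r)
  have hIR : ∀ x : R, x ∈ I.map (algebraMap A R) ↔ x ∈ (I • ⊤ : Submodule A R) := by
    intro x
    rw [Ideal.smul_top_eq_map]; rfl
  have hbk' : ∀ k, φ k = 0 → b * k ∈ (I • ⊤ : Submodule A R) := fun k hk => (hIR _).1 (hbk k hk)
  have hbb : b * (b - 1) ∈ (I • ⊤ : Submodule A R) := hbk' _ (by simp [hb])
  let v : Option s → R := fun i => i.elim b (fun r => (1 - b) * r)
  have hspan : Submodule.span A (Set.range v) = ⊤ := by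
    rw [eq_top_iff]
    apply Submodule.le_of_le_smul_of_le_jacobson_bot (Module.Finite.fg_top) hI
    rw [← hs, Submodule.span_le]
    intro r hr
    have h1 : b * (r - algebraMap A R (a r)) ∈ (I • ⊤ : Submodule A R) :=
      hbk' _ (by rw [map_sub, hφ, ha, sub_self])
    have h2 : (1 - b) * r ∈ Submodule.span A (Set.range v) := Submodule.subset_span ⟨some ⟨r, hr⟩, rfl⟩
    have h3 : b ∈ Submodule.span A (Set.range v) := Submodule.subset_span ⟨none, rfl⟩
    have h4 : r = ((1 - b) * r + a r • b) + b * (r - algebraMap A R (a r)) := by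
      rw [Algebra.smul_def]; ring
    rw [hs, SetLike.mem_coe, h4]
    exact add_mem (Submodule.mem_sup_left (add_mem h2 (Submodule.smul_mem _ _ h3)))
      (Submodule.mem_sup_right h1)
  let d : Option s → A := fun i => i.elim 1 (fun _ => 0)
  have key : ∀ j, b * v j - d j • v j ∈ I • Submodule.span A (Set.range v) := by
    rw [hspan]
    rintro (_ | r)
    · change b * b - (1 : A) • b ∈ _
      rw [one_smul]
      convert hbb using 1
      ring
    · change b * ((1 - b) * r) - (0 : A) • _ ∈ _
      rw [zero_smul, sub_zero]
      exact hbk' _ (by simp [hb])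
  have key2 : ∀ j, ∃ c : Option s → A, (∀ i, c i ∈ I) ∧ ∑ i, c i • v i = b * v j - d j • v j := by
    intro j
    obtain ⟨c, hc, hc'⟩ := (Submodule.mem_ideal_smul_span_iff_exists_sum I v _).1 (key j)
    refine ⟨c, hc, ?_⟩
    rw [← hc', Finsupp.sum_fintype]
    simp
  choose c hcI hc using key2
  let T : Matrix (Option s) (Option s) A := Matrix.diagonal d + Matrix.of (fun i j => c j i)
  have hT : T.Represents v (Algebra.lmul A R b) := by
    rw [Matrix.represents_iff']
    intro j
    simp only [T, Matrix.add_apply, Matrix.of_apply, add_smul, Finset.sum_add_distrib, hc]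
    simp [Matrix.diagonal_apply]
  refine ⟨T.charpoly, s.card, T.charpoly_monic, ?_, ?_⟩
  · rw [← Matrix.charpoly_map]
    have : T.map (Ideal.Quotient.mk I) = Matrix.diagonal (fun i => Ideal.Quotient.mk I (d i)) := by
      ext i j
      simp only [T, Matrix.map_apply, Matrix.add_apply, Matrix.of_apply, map_add,
        Ideal.Quotient.eq_zero_iff_mem.2 (hcI j i), add_zero, Matrix.diagonal_apply]
      split_ifs <;> simp
    rw [this, Matrix.charpoly_diagonal, Fintype.prod_option]
    simp [d]
  · let T' : Matrix.isRepresentation A v := ⟨T, _, hT⟩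
    have h1 := Matrix.isRepresentation.eq_toEnd_of_represents A v hspan T' hT
    have h2 : aeval (Algebra.lmul A R b) T.charpoly = 0 := by
      rw [← h1, Polynomial.aeval_algHom_apply]
      convert map_zero (Matrix.isRepresentation.toEnd A v hspan)
      apply Subtype.ext
      rw [← Subalgebra.coe_val, ← Polynomial.aeval_algHom_apply]
      exact Matrix.aeval_self_charpoly T
    rw [Polynomial.aeval_algHom_apply] at h2
    have := congrArg (fun f : Module.End A R => f 1) h2
    simpa using this

open Polynomial in
lemma aux_exists_idem {A R : Type} [CommRing A] [CommRing R] (I : Ideal A) [HenselianRing A I]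
    [Algebra A R] [Module.Finite A R]
    (φ : R →ₐ[A] A ⧸ I) (b : R) (hb : φ b = 1)
    (hbk : ∀ k, φ k = 0 → b * k ∈ I.map (algebraMap A R)) :
    ∃ (e : R) (l : A), IsUnit l ∧ e * e = e ∧ φ e = 1 ∧ b * e = algebraMap A R l * e := by
  have hI : I ≤ Ideal.jacobson ⊥ := HenselianRing.jac
  have hloc := isLocalHom_of_le_jacobson_bot I hI
  obtain ⟨χ, N, hm, hmap, hχ⟩ := aux_exists_poly I hI φ b hb hbk
  have hd : Ideal.Quotient.mk I (χ.derivative.eval 1) = 1 := by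
    rw [← Polynomial.eval₂_at_apply, ← Polynomial.eval_map, ← Polynomial.derivative_map, hmap]
    simp
  have h0 : χ.eval 1 ∈ I := by
    rw [← Ideal.Quotient.eq_zero_iff_mem, ← Polynomial.eval₂_at_apply, ← Polynomial.eval_map, hmap]
    simp
  obtain ⟨l, hl, hl1⟩ := HenselianRing.is_henselian χ hm 1 h0 (by rw [hd]; exact isUnit_one)
  have hl1' : Ideal.Quotient.mk I l = 1 := by
    rw [← map_one (Ideal.Quotient.mk I), Ideal.Quotient.eq]; exact hl1
  obtain ⟨q, hq⟩ := Polynomial.dvd_iff_isRoot.2 hl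
  have hql : χ.derivative.eval l = q.eval l := by
    rw [hq]; simp
  have hqm : Ideal.Quotient.mk I (q.eval l) = 1 := by
    rw [← hql, ← Polynomial.eval₂_at_apply, ← Polynomial.eval_map, ← Polynomial.derivative_map,
      hmap, hl1']
    simp
  have hqu : IsUnit (q.eval l) := hloc.map_nonunit _ (by rw [hqm]; exact isUnit_one)
  have hlu : IsUnit l := hloc.map_nonunit _ (by rw [hl1']; exact isUnit_one)
  obtain ⟨w, hw⟩ := hqu.exists_left_inv
  have hbq : b * aeval b q = algebraMap A R l * aeval b q := by
    rw [hq, map_mul] at hχ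
    simp only [map_sub, aeval_X, aeval_C] at hχ
    linear_combination hχ
  have hqq : aeval b q * aeval b q = algebraMap A R (q.eval l) * aeval b q := by
    have : X - C l ∣ q - C (q.eval l) := by
      rw [Polynomial.dvd_iff_isRoot]; simp
    obtain ⟨t, ht⟩ := this
    have := congrArg (aeval b) ht
    simp only [map_sub, map_mul, aeval_X, aeval_C] at this
    linear_combination (aeval b q) * this + aeval b t * hbq
  have hwR : algebraMap A R w * algebraMap A R (q.eval l) = 1 := by
    rw [← map_mul, hw, map_one]
  refine ⟨algebraMap A R w * aeval b q, l, hlu, ?_, ?_, ?_⟩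
  · linear_combination (algebraMap A R w) ^ 2 * hqq + algebraMap A R w * aeval b q * hwR
  · have h1 : φ (aeval b q) = Ideal.Quotient.mk I (q.eval l) := by
      rw [← Polynomial.aeval_algHom_apply, hb, ← Polynomial.eval₂_at_apply, hl1']
      rfl
    rw [map_mul, h1, show φ (algebraMap A R w) = Ideal.Quotient.mk I w from φ.commutes w,
      ← map_mul, hw, map_one]
  · linear_combination (algebraMap A R w) * hbq

lemma aux_section {A R S : Type} [CommRing A] [CommRing R] [CommRing S] (I : Ideal A)
    [HenselianRing A I]
    [Algebra A R] [Module.Finite A R] [Algebra.FinitePresentation A R]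
    [Algebra R S] [Algebra A S] [IsScalarTower A R S]
    (Δ : R) [IsLocalization.Away Δ S] [Algebra.Etale A S]
    (Φ : S →ₐ[A] A ⧸ I) : ∃ ψ : S →ₐ[A] A, (Ideal.Quotient.mkₐ A I).comp ψ = Φ := by
  have hI : I ≤ Ideal.jacobson ⊥ := HenselianRing.jac
  have hloc := isLocalHom_of_le_jacobson_bot I hI
  let φ : R →ₐ[A] A ⧸ I := Φ.comp (IsScalarTower.toAlgHom A R S)
  have hΔ : IsUnit (φ Δ) := (IsLocalization.Away.algebraMap_isUnit (S := S) Δ).map Φ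
  have hφ : ∀ c : A, φ (algebraMap A R c) = Ideal.Quotient.mk I c := fun c => φ.commutes c
  obtain ⟨b, hb, hbk⟩ := aux_exists_b (S := S) I Δ φ hΔ
  obtain ⟨e, l, hl, hee, hφe, hbe⟩ := aux_exists_idem I φ b hb hbk
  let D : Ideal R := Ideal.span {1 - e}
  let π : R →ₐ[A] R ⧸ D := Ideal.Quotient.mkₐ A D
  have hπs : Function.Surjective π := Ideal.Quotient.mk_surjective
  have hπe : π e = 1 := by
    have : π (1 - e) = 0 := Ideal.Quotient.eq_zero_iff_mem.2 (Ideal.subset_span rfl)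
    rw [map_sub, map_one, sub_eq_zero] at this
    exact this.symm
  have hπb : π b = algebraMap A (R ⧸ D) l := by
    have := congrArg π hbe
    rw [map_mul, map_mul, hπe, mul_one, mul_one, π.commutes] at this
    exact this
  have hD : ∀ x ∈ D, φ x = 0 := by
    intro x hx
    obtain ⟨y, rfl⟩ := Ideal.mem_span_singleton'.1 hx
    simp [hφe]
  let φE : (R ⧸ D) →ₐ[A] A ⧸ I := Ideal.Quotient.liftₐ D φ hD
  have hφE : ∀ r, φE (π r) = φ r := fun r => rfl
  -- surjectivity of the structure map
  have hsurj : Function.Surjective (Algebra.ofId A (R ⧸ D)) := by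
    have : (⊤ : Submodule A (R ⧸ D)) ≤ LinearMap.range (Algebra.linearMap A (R ⧸ D)) := by
      apply Submodule.le_of_le_smul_of_le_jacobson_bot (Module.Finite.fg_top) hI
      intro x _
      obtain ⟨r, rfl⟩ := hπs x
      obtain ⟨c, hc⟩ := Ideal.Quotient.mk_surjective (φ r)
      have h1 : b * (r - algebraMap A R c) ∈ (I • ⊤ : Submodule A R) := by
        rw [Ideal.smul_top_eq_map]
        exact hbk _ (by rw [map_sub, hφ, hc, sub_self])
      have h2 : π (b * (r - algebraMap A R c)) ∈ (I • ⊤ : Submodule A (R ⧸ D)) := by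
        have := Submodule.mem_map_of_mem (f := π.toLinearMap) h1
        rw [Submodule.map_smul''] at this
        exact Submodule.smul_mono le_rfl le_top this
      obtain ⟨w, hw⟩ := hl.exists_left_inv
      have h3 : π r = algebraMap A _ c + w • π (b * (r - algebraMap A R c)) := by
        have hw' : algebraMap A (R ⧸ D) w * algebraMap A (R ⧸ D) l = 1 := by
          rw [← map_mul, hw, map_one]
        rw [map_mul, hπb, map_sub, π.commutes, Algebra.smul_def]
        linear_combination -(π r - algebraMap A (R ⧸ D) c) * hw'
      rw [h3]
      exact add_mem (Submodule.mem_sup_left ⟨c, rfl⟩)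
        (Submodule.mem_sup_right (Submodule.smul_mem _ _ h2))
    intro x
    obtain ⟨c, hc⟩ := this (Submodule.mem_top (x := x))
    exact ⟨c, hc⟩
  set J : Ideal A := RingHom.ker (Algebra.ofId A (R ⧸ D)) with hJ
  have hJI : J ≤ I := by
    intro c hc
    have h1 : algebraMap A (R ⧸ D) c = 0 := hc
    have h2 := φE.commutes c
    rw [h1, map_zero] at h2
    exact Ideal.Quotient.eq_zero_iff_mem.1 h2.symm
  have : Algebra.FinitePresentation A (R ⧸ D) :=
    Algebra.FinitePresentation.quotient ⟨{1 - e}, by simp [D]⟩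
  have hJfg : J.FG := Algebra.FinitePresentation.ker_fG_of_surjective _ hsurj
  have hπΔ : IsUnit (π Δ) := by
    obtain ⟨c, hc⟩ := hsurj (π Δ)
    have hc' : algebraMap A (R ⧸ D) c = π Δ := hc
    have : Ideal.Quotient.mk I c = φ Δ := by
      have h2 := φE.commutes c
      rw [hc', hφE] at h2
      exact h2.symm
    have hcu : IsUnit c := hloc.map_nonunit _ (by rw [this]; exact hΔ)
    rw [← hc']
    exact hcu.map _
  let PS : S →ₐ[A] R ⧸ D := IsLocalization.Away.liftAlgHom (f := π) Δ hπΔ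
  have hPS : ∀ r, PS (algebraMap R S r) = π r := fun r => by simp [PS]
  have hJ2 : J ≤ J ^ 2 := by
    let p : A ⧸ J ^ 2 →ₐ[A] R ⧸ D := Ideal.Quotient.liftₐ (J ^ 2) (Algebra.ofId A (R ⧸ D))
      (fun x hx => Ideal.pow_le_self two_ne_zero hx)
    have hp : Function.Surjective p := fun x => by
      obtain ⟨c, hc⟩ := hsurj x
      exact ⟨Ideal.Quotient.mk _ c, hc⟩
    have hker : RingHom.ker (p : A ⧸ J ^ 2 →+* R ⧸ D) = J.map (Ideal.Quotient.mk (J ^ 2)) := by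
      apply le_antisymm
      · intro x hx
        obtain ⟨c, rfl⟩ := Ideal.Quotient.mk_surjective x
        exact Ideal.mem_map_of_mem _ (show c ∈ J from hx)
      · rw [Ideal.map_le_iff_le_comap]
        intro c hc
        exact hc
    have hnil : RingHom.ker (p : A ⧸ J ^ 2 →+* R ⧸ D) ^ 2 = ⊥ := by
      rw [hker, ← Ideal.map_pow, Ideal.map_quotient_self]
    let G : S →ₐ[A] A ⧸ J ^ 2 := Algebra.FormallySmooth.liftOfSurjective PS p hp ⟨2, hnil⟩
    have hG : ∀ x, p (G x) = PS x := Algebra.FormallySmooth.liftOfSurjective_apply PS p hp ⟨2, hnil⟩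
    let g : R →ₐ[A] A ⧸ J ^ 2 := G.comp (IsScalarTower.toAlgHom A R S)
    have hg : ∀ r, p (g r) = π r := fun r => (hG _).trans (hPS r)
    have hge : g (1 - e) = 0 := by
      have h1 : g (1 - e) ∈ RingHom.ker (p : A ⧸ J ^ 2 →+* R ⧸ D) := by
        change p (g (1 - e)) = 0
        rw [hg, map_sub, hπe, map_one, sub_self]
      have h2 : g (1 - e) ^ 2 = 0 := by
        have := Ideal.pow_mem_pow h1 2
        rwa [hnil] at this
      have h3 : (1 - e) ^ 2 = 1 - e := by linear_combination hee
      rw [← h3, map_pow, h2]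
    let gE : R ⧸ D →ₐ[A] A ⧸ J ^ 2 := Ideal.Quotient.liftₐ D g (by
      intro x hx
      obtain ⟨y, rfl⟩ := Ideal.mem_span_singleton'.1 hx
      rw [map_mul, hge, mul_zero])
    intro c hc
    have h1 : algebraMap A (R ⧸ D) c = 0 := hc
    have h2 := gE.commutes c
    rw [h1, map_zero] at h2
    exact Ideal.Quotient.eq_zero_iff_mem.1 h2.symm
  have hJbot : J = ⊥ := Submodule.eq_bot_of_le_smul_of_le_jacobson_bot J J hJfg
    (by rw [smul_eq_mul, ← pow_two]; exact hJ2) (hJI.trans hI)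
  have hinj : Function.Injective (Algebra.ofId A (R ⧸ D)) :=
    (RingHom.injective_iff_ker_eq_bot _).2 hJbot
  let E : A ≃ₐ[A] R ⧸ D := AlgEquiv.ofBijective _ ⟨hinj, hsurj⟩
  refine ⟨E.symm.toAlgHom.comp PS, ?_⟩
  apply IsLocalization.algHom_ext (.powers Δ)
  ext r
  change Ideal.Quotient.mk I (E.symm (PS (algebraMap R S r))) = φ r
  rw [hPS, ← hφE]
  obtain ⟨c, hc⟩ := E.surjective (π r)
  rw [← hc, E.symm_apply_apply]
  exact (φE.commutes c).symm

open Polynomial in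
lemma aux_factor {A : Type} [CommRing A] (I : Ideal A) [HenselianRing A I] (n : ℕ)
    (p : MonicDegreeEq A (n + n))
    (hp : p.1.map (Ideal.Quotient.mk I) = X ^ n * (X - 1) ^ n) :
    ∃ g h : A[X], g * h = p.1 ∧ IsCoprime g h ∧
      g.map (Ideal.Quotient.mk I) = X ^ n ∧ h.map (Ideal.Quotient.mk I) = (X - 1) ^ n := by
  cases subsingleton_or_nontrivial (A ⧸ I) with
  | inl hs =>
    refine ⟨p.1, 1, mul_one _, isCoprime_one_right, Subsingleton.elim _ _, Subsingleton.elim _ _⟩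
  | inr hn =>
    let g0 : MonicDegreeEq (A ⧸ I) n := .mk (X ^ n) (monic_X_pow n) (natDegree_X_pow n)
    let h0 : MonicDegreeEq (A ⧸ I) n := .mk ((X - 1) ^ n)
      (by simpa using (monic_X_sub_C (1 : A ⧸ I)).pow n)
      (by
        have := (monic_X_sub_C (1 : A ⧸ I)).natDegree_pow n
        rw [natDegree_X_sub_C, mul_one] at this
        simpa using this)
    let S := UniversalCoprimeFactorizationRing n n rfl p
    let Φ : S →ₐ[A] A ⧸ I :=
      (UniversalCoprimeFactorizationRing.homEquiv (A ⧸ I) n n rfl p).symm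
        ⟨(g0, h0), hp.symm, by
          apply IsCoprime.pow
          exact ⟨1, -1, by ring⟩⟩
    obtain ⟨ψ, hψ⟩ := aux_section (R := UniversalFactorizationRing n n rfl p) I
      (UniversalFactorizationRing.presentation n n rfl p).jacobian Φ
    let q := UniversalCoprimeFactorizationRing.homEquiv A n n rfl p ψ
    have h1 := UniversalCoprimeFactorizationRing.homEquiv_comp_fst (T := A ⧸ I) A n n rfl p ψ
      (Ideal.Quotient.mkₐ A I)
    have h2 := UniversalCoprimeFactorizationRing.homEquiv_comp_snd (T := A ⧸ I) A n n rfl p ψ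
      (Ideal.Quotient.mkₐ A I)
    rw [hψ] at h1 h2
    simp only [Φ, Equiv.apply_symm_apply] at h1 h2
    refine ⟨q.1.1.1, q.1.2.1, ?_, q.2.2, ?_, ?_⟩
    · simpa using q.2.1
    · exact (congrArg Subtype.val h1).symm
    · exact (congrArg Subtype.val h2).symm

open Polynomial in
/-- lifting idempotents -/
lemma aux_lift_idem {A F F' : Type} [CommRing A] (I : Ideal A) [HenselianRing A I]
    [AddCommGroup F] [Module A F] [Module.Finite A F] [AddCommGroup F'] [Module A F']
    (u : Module.End A F) (hu : LinearMap.range (u ^ 2 - u) ≤ I • ⊤)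
    (m : F →ₗ[A] F') (hm : Function.Surjective m) (hmI : ∀ c ∈ I, ∀ x, c • m x = 0)
    (u' : Module.End A F') (huu' : m ∘ₗ u = u' ∘ₗ m) :
    ∃ e : Module.End A F, e * e = e ∧ m ∘ₗ e = m ∘ₗ u := by
  cases subsingleton_or_nontrivial A with
  | inl hs =>
    have := Module.subsingleton A F
    exact ⟨0, Subsingleton.elim _ _, Subsingleton.elim _ _⟩
  | inr hnt =>
  obtain ⟨P, hPm, -, hPc, hP0⟩ :=
    LinearMap.exists_monic_and_natDegree_eq_and_coeff_mem_pow_and_aeval_eq_zero A (u ^ 2 - u) I hu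
  set n := P.natDegree with hn
  rcases Nat.eq_zero_or_pos n with hn0 | hnpos
  · have hP1 : P = 1 := hPm.natDegree_eq_zero.mp (hn ▸ hn0)
    rw [hP1, map_one] at hP0
    have hF : ∀ x : F, x = 0 := fun x => by simpa using LinearMap.congr_fun hP0 x
    exact ⟨0, by simp, by ext x; rw [hF x]; simp⟩
  have hd2 : ((X : A[X]) ^ 2 - X).natDegree = 2 := by compute_degree!
  have hm2 : ((X : A[X]) ^ 2 - X).Monic := by monicity!
  let p : MonicDegreeEq A (n + n) := .mk (P.comp (X ^ 2 - X))
    (hPm.comp hm2 (by rw [hd2]; exact two_ne_zero))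
    (by rw [natDegree_comp_eq_of_mul_ne_zero (by simp [hPm.leadingCoeff, hm2.leadingCoeff]), hd2]; omega)
  have hPmap : P.map (Ideal.Quotient.mk I) = X ^ n := by
    ext k
    rw [coeff_map, coeff_X_pow]
    split_ifs with h
    · rw [h, hn, hPm.coeff_natDegree, map_one]
    · rcases lt_or_gt_of_ne h with h | h
      · rw [Ideal.Quotient.eq_zero_iff_mem]
        exact Ideal.pow_le_self (by omega) (hPc k)
      · rw [coeff_eq_zero_of_natDegree_lt h, map_zero]
  obtain ⟨g, h, hgh, ⟨s, t, hst⟩, hg, hh⟩ := aux_factor I n p (by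
    change (P.comp _).map _ = _
    rw [Polynomial.map_comp, hPmap, ← mul_pow]
    simp
    ring)
  have hpu : aeval u g * aeval u h = 0 := by
    rw [← map_mul, hgh]
    change aeval u (P.comp _) = 0
    rw [aeval_comp]
    simpa using hP0
  have hst' := congrArg (aeval u) hst
  simp only [map_add, map_mul, map_one] at hst'
  have hu'2 : u' * u' = u' := by
    ext x
    obtain ⟨y, rfl⟩ := hm x
    have h1 : ∀ y, m (u y) = u' (m y) := fun y => LinearMap.congr_fun huu' y
    change u' (u' (m y)) = u' (m y)
    rw [← h1, ← h1, ← sub_eq_zero, ← map_sub]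
    have h2 : u (u y) - u y ∈ (I • ⊤ : Submodule A F) := hu ⟨y, by simp [pow_two]⟩
    refine Submodule.smul_induction_on h2 ?_ ?_
    · intro c hc x _
      rw [map_smul, hmI c hc]
    · intro x y hx hy
      rw [map_add, hx, hy, add_zero]
  -- polynomials in `u` reduce to polynomials in `u'`
  have hred : ∀ f : A[X], m ∘ₗ (aeval u f) = (aeval u' f) ∘ₗ m := by
    intro f
    induction f using Polynomial.induction_on' with
    | add f₁ f₂ h₁ h₂ => rw [map_add, map_add, LinearMap.comp_add, LinearMap.add_comp, h₁, h₂]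
    | monomial k c =>
      rw [aeval_monomial, aeval_monomial]
      have : m ∘ₗ (u ^ k) = (u' ^ k) ∘ₗ m := by
        induction k with
        | zero => rfl
        | succ k ih =>
          rw [pow_succ, pow_succ, Module.End.mul_eq_comp, Module.End.mul_eq_comp,
            ← LinearMap.comp_assoc, ih, LinearMap.comp_assoc, huu', LinearMap.comp_assoc]
      ext x
      have := LinearMap.congr_fun this x
      simp only [LinearMap.comp_apply] at this
      simp [this]
  have hI0 : ∀ f₁ f₂ : A[X], f₁.map (Ideal.Quotient.mk I) = f₂.map (Ideal.Quotient.mk I) →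
      aeval u' f₁ = aeval u' f₂ := by
    intro f₁ f₂ hf
    rw [← sub_eq_zero, ← map_sub]
    rw [← sub_eq_zero, ← Polynomial.map_sub] at hf
    rw [aeval_eq_sum_range]
    apply Finset.sum_eq_zero
    intro i _
    have hc : (f₁ - f₂).coeff i ∈ I := by
      rw [← Ideal.Quotient.eq_zero_iff_mem, ← coeff_map, hf, coeff_zero]
    ext x
    obtain ⟨y, hy⟩ := hm ((u' ^ i) x)
    simp only [LinearMap.smul_apply, LinearMap.zero_apply]
    rw [← hy, hmI _ hc]
  have hg' : aeval u' g = u' ^ n := by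
    rw [hI0 g (X ^ n) (by simpa using hg)]; simp
  have hh' : aeval u' h = (u' - 1) ^ n := by
    rw [hI0 h ((X - 1) ^ n) (by simpa using hh)]; simp
  have hcomm : ∀ f₁ f₂ : A[X], Commute (aeval u f₁) (aeval u f₂) := fun f₁ f₂ => by
    rw [Commute, SemiconjBy, ← map_mul, mul_comm, map_mul]
  have hcomm' : ∀ f : A[X], Commute (aeval u' f) u' := fun f => by
    conv_rhs => rw [← aeval_X (R := A) u']
    rw [Commute, SemiconjBy, ← map_mul, mul_comm, map_mul]
  refine ⟨aeval u (s * g), ?_, ?_⟩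
  · have h1 : aeval u (s * g) + aeval u (t * h) = 1 := by rw [← map_add, hst, map_one]
    have h2 : aeval u (s * g) * aeval u (t * h) = 0 := by
      rw [← map_mul, show s * g * (t * h) = s * t * (g * h) by ring, map_mul, map_mul _ g h, hpu,
        mul_zero]
    calc aeval u (s * g) * aeval u (s * g)
        = aeval u (s * g) * (aeval u (s * g) + aeval u (t * h)) := by rw [mul_add, h2, add_zero]
      _ = _ := by rw [h1, mul_one]
  · rw [hred, huu']
    congr 1
    -- `e' = u'`
    have h1 : aeval u' (s * g) + aeval u' (t * h) = 1 := by rw [← map_add, hst, map_one]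
    obtain ⟨k, hk⟩ : ∃ k, n = k + 1 := ⟨n - 1, by omega⟩
    have hz : ((u' - 1) ^ n) * u' = 0 := by
      rw [hk, pow_succ, mul_assoc, sub_mul, hu'2, one_mul, sub_self, mul_zero]
    have h2 : aeval u' (t * h) * u' = 0 := by rw [map_mul, hh', mul_assoc, hz, mul_zero]
    have h3 : aeval u' (s * g) * u' = aeval u' (s * g) := by
      rw [map_mul, hg', hk, pow_succ, mul_assoc, mul_assoc, hu'2]
    calc aeval u' (s * g) = (aeval u' (s * g) + aeval u' (t * h)) * u' := by
          rw [add_mul, h2, h3, add_zero]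
      _ = u' := by rw [h1, one_mul]


lemma aux_red_eq_zero {A F : Type} [CommRing A] (I : Ideal A) [AddCommGroup F] [Module A F]
    (x : F) (hx : (1 : A ⧸ I) ⊗ₜ[A] x = 0) : x ∈ (I • ⊤ : Submodule A F) := by
  have h := congrArg (TensorProduct.quotTensorEquivQuotSMul F I) hx
  rw [map_zero] at h
  have h2 : TensorProduct.quotTensorEquivQuotSMul F I ((1 : A ⧸ I) ⊗ₜ[A] x)
      = Submodule.Quotient.mk x := by
    have := TensorProduct.quotTensorEquivQuotSMul_mk_tmul I (1 : A) x
    simpa using this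
  rw [h2] at h
  exact (Submodule.Quotient.mk_eq_zero _).mp h

lemma aux_red_surj {A : Type} [CommRing A] (I : Ideal A) (F : Type) [AddCommGroup F] [Module A F] :
    Function.Surjective (TensorProduct.mk A (A ⧸ I) F 1) :=
  TensorProduct.mk_surjective A F (A ⧸ I) Ideal.Quotient.mk_surjective

lemma aux_bij {A F : Type} [CommRing A] (I : Ideal A) [HenselianRing A I]
    [AddCommGroup F] [Module A F] [Module.Finite A F] (f : F →ₗ[A] F)
    (hf : ∀ x, (1 : A ⧸ I) ⊗ₜ[A] f x = (1 : A ⧸ I) ⊗ₜ[A] x) : Function.Bijective f := by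
  have hs : Function.Surjective f := by
    rw [← LinearMap.range_eq_top, ← top_le_iff]
    refine Submodule.le_of_le_smul_of_le_jacobson_bot Module.Finite.fg_top
      (HenselianRing.jac (I := I)) ?_
    intro x _
    have h1 : x - f x ∈ (I • ⊤ : Submodule A F) := by
      apply aux_red_eq_zero
      rw [TensorProduct.tmul_sub, hf, sub_self]
    rw [← add_sub_cancel (f x) x]
    exact Submodule.add_mem_sup ⟨x, rfl⟩ h1
  exact ⟨OrzechProperty.injective_of_surjective_endomorphism f hs, hs⟩

lemma aux_part_two {A P₁ P₂ : Type} [CommRing A] (I : Ideal A) [HenselianRing A I]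
    [AddCommGroup P₁] [Module A P₁] [AddCommGroup P₂] [Module A P₂]
    [Module.Finite A P₁] [Module.Projective A P₁] [Module.Finite A P₂] [Module.Projective A P₂]
    (β' : (TensorProduct A (A ⧸ I) P₁) ≃ₗ[A ⧸ I] (TensorProduct A (A ⧸ I) P₂)) :
    ∃ β : P₁ ≃ₗ[A] P₂, ∀ x : P₁,
      β' ((1 : A ⧸ I) ⊗ₜ[A] x) = (1 : A ⧸ I) ⊗ₜ[A] (β x) := by
  obtain ⟨β, hβ⟩ := Module.projective_lifting_property (TensorProduct.mk A (A ⧸ I) P₂ 1)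
    ((β'.toLinearMap.restrictScalars A) ∘ₗ TensorProduct.mk A (A ⧸ I) P₁ 1) (aux_red_surj I P₂)
  obtain ⟨γ, hγ⟩ := Module.projective_lifting_property (TensorProduct.mk A (A ⧸ I) P₁ 1)
    ((β'.symm.toLinearMap.restrictScalars A) ∘ₗ TensorProduct.mk A (A ⧸ I) P₂ 1)
    (aux_red_surj I P₁)
  have h1 : ∀ x, (1 : A ⧸ I) ⊗ₜ[A] β x = β' ((1 : A ⧸ I) ⊗ₜ[A] x) :=
    fun x => LinearMap.congr_fun hβ x
  have h2 : ∀ x, (1 : A ⧸ I) ⊗ₜ[A] γ x = β'.symm ((1 : A ⧸ I) ⊗ₜ[A] x) :=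
    fun x => LinearMap.congr_fun hγ x
  have b1 : Function.Bijective (γ ∘ₗ β) := aux_bij I _ fun x => by
    rw [LinearMap.comp_apply, h2, h1, LinearEquiv.symm_apply_apply]
  have b2 : Function.Bijective (β ∘ₗ γ) := aux_bij I _ fun x => by
    rw [LinearMap.comp_apply, h1, h2, LinearEquiv.apply_symm_apply]
  have hb : Function.Bijective β :=
    ⟨Function.Injective.of_comp (f := γ) b1.1, Function.Surjective.of_comp (g := γ) b2.2⟩
  exact ⟨LinearEquiv.ofBijective β hb, fun x => (h1 x).symm⟩

lemma aux_part_one {A Q : Type} [CommRing A] (I : Ideal A) [HenselianRing A I]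
    [AddCommGroup Q] [Module (A ⧸ I) Q] [Module.Finite (A ⧸ I) Q] [Module.Projective (A ⧸ I) Q] :
    ∃ (P : Type) (_ : AddCommGroup P) (_ : Module A P),
      Module.Finite A P ∧ Module.Projective A P ∧
      Nonempty ((TensorProduct A (A ⧸ I) P) ≃ₗ[A ⧸ I] Q) := by
  obtain ⟨n, f, g, -, -, hfg⟩ := Module.Finite.exists_comp_eq_id_of_projective (A ⧸ I) Q
  let w := TensorProduct.piScalarRight A (A ⧸ I) (A ⧸ I) (Fin n)
  let F := Fin n → A
  let t : (A ⧸ I) ⊗[A] F →ₗ[A ⧸ I] Q := f ∘ₗ w.toLinearMap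
  let j : Q →ₗ[A ⧸ I] (A ⧸ I) ⊗[A] F := w.symm.toLinearMap ∘ₗ g
  have htj : ∀ x, t (j x) = x := fun x => by
    have := LinearMap.congr_fun hfg x
    simpa [t, j] using this
  let m := TensorProduct.mk A (A ⧸ I) F 1
  let u' : Module.End A ((A ⧸ I) ⊗[A] F) := (j ∘ₗ t).restrictScalars A
  obtain ⟨u, hu⟩ := Module.projective_lifting_property m (u' ∘ₗ m) (aux_red_surj I F)
  have hu1 : ∀ x, m (u x) = j (t (m x)) := fun x => LinearMap.congr_fun hu x
  obtain ⟨e, he, hme⟩ := aux_lift_idem I u (by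
    rintro _ ⟨x, rfl⟩
    apply aux_red_eq_zero
    change m _ = 0
    rw [LinearMap.sub_apply, map_sub, pow_two, Module.End.mul_apply, hu1, hu1, htj, sub_self])
    m (aux_red_surj I F) (by
      intro c hc x
      change c • ((1 : A ⧸ I) ⊗ₜ[A] x) = 0
      rw [TensorProduct.smul_tmul', Algebra.smul_def, mul_one, Ideal.Quotient.algebraMap_eq,
        Ideal.Quotient.eq_zero_iff_mem.mpr hc, TensorProduct.zero_tmul]) u' hu
  have he1 : ∀ x, m (e x) = j (t (m x)) := fun x => by
    rw [← hu1]; exact LinearMap.congr_fun hme x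
  let P := LinearMap.range e
  let i : P →ₗ[A] F := P.subtype
  let s : F →ₗ[A] P := e.rangeRestrict
  have hsi : s ∘ₗ i = LinearMap.id := by
    ext1 ⟨_, y, rfl⟩
    apply Subtype.ext
    exact LinearMap.congr_fun he y
  have his : i ∘ₗ s = e := rfl
  have hbe : e.baseChange (A ⧸ I) = j ∘ₗ t := by
    apply TensorProduct.AlgebraTensorModule.curry_injective
    ext1
    apply LinearMap.ext
    intro x
    exact he1 x
  refine ⟨P, inferInstance, inferInstance, inferInstance, Module.Projective.of_split i s hsi, ⟨?_⟩⟩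
  refine LinearEquiv.ofLinearMap (t ∘ₗ i.baseChange (A ⧸ I)) (s.baseChange (A ⧸ I) ∘ₗ j) ?_ ?_
  · calc _ = t ∘ₗ ((i ∘ₗ s).baseChange (A ⧸ I)) ∘ₗ j := by
          rw [LinearMap.baseChange_comp]; rfl
      _ = LinearMap.id := by
          rw [his, hbe]; ext x; simp [htj]
  · calc _ = s.baseChange (A ⧸ I) ∘ₗ (j ∘ₗ t) ∘ₗ i.baseChange (A ⧸ I) := rfl
      _ = (s ∘ₗ i).baseChange (A ⧸ I) ∘ₗ (s ∘ₗ i).baseChange (A ⧸ I) := by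
          rw [← hbe, ← his]; simp only [LinearMap.baseChange_comp]; rfl
      _ = LinearMap.id := by
          rw [hsi, LinearMap.baseChange_id]; rfl


/-- Let (A, I) be a henselian pair. Then:
(i) every finitely generated projective A/I-module lifts to a finitely generated projective
A-module;
(ii) any isomorphism β̄ between the reductions mod I of two finitely generated projective
A-modules lifts to an isomorphism β : P₁ ≃ P₂ with β ⊗ id_{A/I} = β̄. -/
theorem stmt_17 (A : Type) [CommRing A] (I : Ideal A) [HenselianRing A I] :
    (∀ (Q : Type) [AddCommGroup Q] [Module (A ⧸ I) Q],
        Module.Finite (A ⧸ I) Q → Module.Projective (A ⧸ I) Q →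
        ∃ (P : Type) (_ : AddCommGroup P) (_ : Module A P),
          Module.Finite A P ∧ Module.Projective A P ∧
          Nonempty ((TensorProduct A (A ⧸ I) P) ≃ₗ[A ⧸ I] Q))
    ∧ (∀ (P₁ P₂ : Type) [AddCommGroup P₁] [Module A P₁] [AddCommGroup P₂] [Module A P₂],
        Module.Finite A P₁ → Module.Projective A P₁ →
        Module.Finite A P₂ → Module.Projective A P₂ →
        ∀ β' : (TensorProduct A (A ⧸ I) P₁) ≃ₗ[A ⧸ I] (TensorProduct A (A ⧸ I) P₂),
          ∃ β : P₁ ≃ₗ[A] P₂, ∀ x : P₁,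
            β' ((1 : A ⧸ I) ⊗ₜ[A] x) = (1 : A ⧸ I) ⊗ₜ[A] (β x)) := by
  refine ⟨?_, ?_⟩
  · intro Q _ _ _ _
    exact aux_part_one I
  · intro P₁ P₂ _ _ _ _ _ _ _ _ β'
    exact aux_part_two I β'
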